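/- Let U ⊆ ℝ² be open and B : U → SL₂(𝒜) a C¹ map such that B⁻¹·∂_u B = [[0, θ₀], [ω₀, 0]] and B⁻¹·∂_v B = [[0, σθ₀], [σω₀, 0]] for conformal maps θ₀, ω₀ : U → 𝒜. Then F := B·diag(−1, 1)·B* satisfies: (i) F = F* and det F = −1, i.e. F takes values in the pseudo-sphere 𝕊^{1,2} ≅ {C ∈ Herm₂(𝒜) : det C = −1}; (ii) for every X = (X₁, X₂) ∈ ℝ², with z := X₁ + σX₂, one has dF(X) = B·[[0, θ₀z − ω̂₀ẑ], [θ̂₀ẑ − ω₀z, 0]]·B* and −det(dF(X)) = |θ₀z − ω̂₀ẑ|², which is the induced metric of the immersion. -/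

import Mathlib

noncomputable section

/-! ### The algebra `𝒜` of Lorentz (split-complex) numbers.

We realize `𝒜` (the real algebra with basis `{1, σ}`, `σ² = 1`) in split coordinates:
`(x, y) : ℝ × ℝ` represents `u + σ v` with `x = u + v`, `y = u - v`.  Multiplication is then
componentwise, `1 = (1,1)`, and `σ = (1, -1)` satisfies `σ² = 1`. -/

abbrev LorentzA : Type := ℝ × ℝ

/-- The element `σ ∈ 𝒜`, with `σ² = 1`, `σ ∉ ℝ·1`. -/
def sA : LorentzA := (1, -1)

/-- The element `u + σ v` of `𝒜`. -/
def mkA (u v : ℝ) : LorentzA := (u + v, u - v)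

/-- The inclusion `ℝ ⊆ 𝒜`, `t ↦ t·1`. -/
def toA (t : ℝ) : LorentzA := (t, t)

/-- Conjugation of `𝒜`: `u + σ v ↦ u - σ v` (the swap, in split coordinates). -/
def conjA (a : LorentzA) : LorentzA := (a.2, a.1)

/-- `|a|² := a·â = u² - v²`, as a real number (so that `a * conjA a = toA (nsqA a)`). -/
def nsqA (a : LorentzA) : ℝ := a.1 * a.2

/-- The real part of `a = u + σ v ∈ 𝒜`, namely `u`. -/
def ReA (a : LorentzA) : ℝ := (a.1 + a.2) / 2

/-- The imaginary part of `a = u + σ v ∈ 𝒜`, namely `v`. -/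
def ImA (a : LorentzA) : ℝ := (a.1 - a.2) / 2

/-- The idempotent `(1 + σ)/2` of `𝒜`. -/
def eP : LorentzA := (1 + sA) / 2

/-- The idempotent `(1 - σ)/2` of `𝒜`. -/
def eM : LorentzA := (1 - sA) / 2

/-! ### Derivatives of maps `ℝ² → 𝒜` and `ℝ² → ℝ`. -/

/-- `∂_u f`. -/
def duA (f : ℝ × ℝ → LorentzA) (x : ℝ × ℝ) : LorentzA := fderiv ℝ f x (1, 0)

/-- `∂_v f`. -/
def dvA (f : ℝ × ℝ → LorentzA) (x : ℝ × ℝ) : LorentzA := fderiv ℝ f x (0, 1)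

/-- `∂_a f = ½ (∂_u f + σ ∂_v f)`. -/
def Da (f : ℝ × ℝ → LorentzA) (x : ℝ × ℝ) : LorentzA := ((2:ℝ)⁻¹) • (duA f x + sA * dvA f x)

/-- `∂_â f = ½ (∂_u f - σ ∂_v f)`.  A map is conformal iff `∂_â f = 0`. -/
def Dahat (f : ℝ × ℝ → LorentzA) (x : ℝ × ℝ) : LorentzA := ((2:ℝ)⁻¹) • (duA f x - sA * dvA f x)

/-- `∂_u f` for real-valued `f`. -/
def duR (f : ℝ × ℝ → ℝ) (x : ℝ × ℝ) : ℝ := fderiv ℝ f x (1, 0)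

/-- `∂_v f` for real-valued `f`. -/
def dvR (f : ℝ × ℝ → ℝ) (x : ℝ × ℝ) : ℝ := fderiv ℝ f x (0, 1)

/-- `∂²f/∂u²`. -/
def duuR (f : ℝ × ℝ → ℝ) (x : ℝ × ℝ) : ℝ := fderiv ℝ (fun y => fderiv ℝ f y (1, 0)) x (1, 0)

/-- `∂²f/∂v²`. -/
def dvvR (f : ℝ × ℝ → ℝ) (x : ℝ × ℝ) : ℝ := fderiv ℝ (fun y => fderiv ℝ f y (0, 1)) x (0, 1)

/-- The wave operator `□ f = -∂²f/∂u² + ∂²f/∂v²`. -/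
def boxR (f : ℝ × ℝ → ℝ) (x : ℝ × ℝ) : ℝ := -duuR f x + dvvR f x

/-! ### 2×2 matrices over `𝒜`. -/

abbrev M2A := Matrix (Fin 2) (Fin 2) LorentzA

/-- The conjugate transpose `B*` of `B ∈ M₂(𝒜)`. -/
def ctrans (B : M2A) : M2A := (B.map conjA).transpose

/-- `Herm₂(𝒜) = {B ∈ M₂(𝒜) : B = B*}`. -/
def Herm2 : Set M2A := {B | B = ctrans B}

/-- `SL₂(𝒜) = {B ∈ M₂(𝒜) : det B = 1}`. -/
def SL2A : Set M2A := {B | B.det = 1}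

/-- The inclusion `M₂(ℝ) ⊆ M₂(𝒜)`. -/
def mR (C : Matrix (Fin 2) (Fin 2) ℝ) : M2A := C.map toA

/-! ### The complexified Lorentz numbers `𝒜_ℂ = 𝒜 ⊗ ℂ ≅ ℂ × ℂ` (split coordinates),
and the quaternions `ℍ^{𝒜_ℂ}` with coefficients in `𝒜_ℂ`. -/

abbrev AC : Type := ℂ × ℂ

/-- `σ ∈ 𝒜_ℂ`. -/
def sC : AC := (1, -1)

/-- The complex unit `i ∈ 𝒜_ℂ`. -/
def iC : AC := (Complex.I, Complex.I)

/-- Conjugation `u + σ v ↦ u - σ v` (`u, v ∈ ℂ`) of `𝒜_ℂ`. -/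
def hatC (z : AC) : AC := (z.2, z.1)

/-- The inclusion `ℝ ⊆ 𝒜_ℂ`. -/
def rc (t : ℝ) : AC := ((t : ℂ), (t : ℂ))

/-- The inclusion `𝒜 ⊆ 𝒜_ℂ`. -/
def toAC (a : LorentzA) : AC := ((a.1 : ℂ), (a.2 : ℂ))

/-- `a ↦ i·a`, the image of `𝒜` in `i·𝒜 ⊆ 𝒜_ℂ`. -/
def iAC (a : LorentzA) : AC := (Complex.I * a.1, Complex.I * a.2)

/-- `ℍ^{𝒜_ℂ}`: quaternions `ζ₀·1 + ζ₁·I + ζ₂·J + ζ₃·K` with `ζᵢ ∈ 𝒜_ℂ`,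
`I² = J² = K² = -1`, `IJ = -JI = K`. -/
abbrev HAC := Quaternion AC

/-- The scalar quaternion `z·1`. -/
def qscalar (z : AC) : HAC := ⟨z, 0, 0, 0⟩

/-- The quaternion unit `I`. -/
def qI : HAC := ⟨0, 1, 0, 0⟩

/-- The quaternion unit `J`. -/
def qJ : HAC := ⟨0, 0, 1, 0⟩

/-- The quaternion unit `K`. -/
def qK : HAC := ⟨0, 0, 0, 1⟩

/-- `ζ̂`: apply `𝒜_ℂ`-conjugation to each coefficient of a quaternion.
(Quaternionic conjugation `ζ̄` is `star ζ`.) -/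
def qhat (q : HAC) : HAC := ⟨hatC q.re, hatC q.imI, hatC q.imJ, hatC q.imK⟩

/-- `H(ζ, ζ') = ½(ζ ζ̄' + ζ' ζ̄) = ζ₀ζ₀' + ζ₁ζ₁' + ζ₂ζ₂' + ζ₃ζ₃' ∈ 𝒜_ℂ`. -/
def Hform (q q' : HAC) : AC := q.re * q'.re + q.imI * q'.imI + q.imJ * q'.imJ + q.imK * q'.imK

/-- `p₀·1 + i p₁·I + p₂·J + i p₃·K` with `pᵢ ∈ 𝒜`: the generic element of `ℍ₀`. -/
def mk0 (p₀ p₁ p₂ p₃ : LorentzA) : HAC :=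
  qscalar (toAC p₀) + qscalar (iAC p₁) * qI + qscalar (toAC p₂) * qJ + qscalar (iAC p₃) * qK

/-- `i q₀·1 + q₁·I + i q₂·J + q₃·K` with `qᵢ ∈ 𝒜`: the generic element of `ℍ₁`. -/
def mk1 (q₀ q₁ q₂ q₃ : LorentzA) : HAC :=
  qscalar (iAC q₀) + qscalar (toAC q₁) * qI + qscalar (iAC q₂) * qJ + qscalar (toAC q₃) * qK

/-- `ℍ₀ = {p₀·1 + i p₁·I + p₂·J + i p₃·K : pᵢ ∈ 𝒜} ⊆ ℍ^{𝒜_ℂ}`. -/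
def H0set : Set HAC := {ζ | ∃ p₀ p₁ p₂ p₃ : LorentzA, ζ = mk0 p₀ p₁ p₂ p₃}

/-- `ℍ₁ = {i q₀·1 + q₁·I + i q₂·J + q₃·K : qᵢ ∈ 𝒜} ⊆ ℍ^{𝒜_ℂ}`. -/
def H1set : Set HAC := {ζ | ∃ q₀ q₁ q₂ q₃ : LorentzA, ζ = mk1 q₀ q₁ q₂ q₃}

/-- `Spin(2,2) = {p ∈ ℍ₀ : H(p,p) = 1}`. -/
def SpinSet : Set HAC := {p | p ∈ H0set ∧ Hform p p = 1}

/-- Extraction of the `𝒜`-coefficient of an element of `𝒜 ⊆ 𝒜_ℂ`. -/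
def reEx (z : AC) : LorentzA := (z.1.re, z.2.re)

/-- Extraction of the `𝒜`-coefficient of an element of `i·𝒜 ⊆ 𝒜_ℂ`. -/
def imEx (z : AC) : LorentzA := (z.1.im, z.2.im)

/-- The map `A₀ : ℍ₀ → M₂(𝒜)`,
`p₀·1 + i p₁·I + p₂·J + i p₃·K ↦ [[p₀ - σp₁, p₂ - σp₃], [-p₂ - σp₃, p₀ + σp₁]]`
(written via coefficient extraction, so that it is a total function on `ℍ^{𝒜_ℂ}`
agreeing with `A₀` on `ℍ₀`). -/
def A0 (ζ : HAC) : M2A :=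
  !![reEx ζ.re - sA * imEx ζ.imI, reEx ζ.imJ - sA * imEx ζ.imK;
     -reEx ζ.imJ - sA * imEx ζ.imK, reEx ζ.re + sA * imEx ζ.imI]

/-- The map `A₁ : ℍ₁ → M₂(𝒜)`,
`i q₀·1 + q₁·I + i q₂·J + q₃·K ↦ [[-q₁ - σq₀, -q₃ - σq₂], [-q₃ + σq₂, q₁ - σq₀]]`. -/
def A1 (ζ : HAC) : M2A :=
  !![-reEx ζ.imI - sA * imEx ζ.re, -reEx ζ.imK - sA * imEx ζ.imJ;
     -reEx ζ.imK + sA * imEx ζ.imJ, reEx ζ.imI - sA * imEx ζ.re]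
/-- The directional derivative `dF_x(X)` of a matrix-valued map, taken entrywise. -/
def dMat (Fm : ℝ × ℝ → M2A) (x X : ℝ × ℝ) : M2A :=
  Matrix.of fun i j => fderiv ℝ (fun y => Fm y i j) x X

/-- Conjugation of `𝒜` as a continuous linear map. -/
def conjL : LorentzA →L[ℝ] LorentzA :=
  (ContinuousLinearMap.snd ℝ ℝ ℝ).prod (ContinuousLinearMap.fst ℝ ℝ ℝ)

theorem conjL_apply (a : LorentzA) : conjL a = conjA a := rfl

theorem conjA_mul (a b : LorentzA) : conjA (a * b) = conjA a * conjA b := rfl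
theorem conjA_add (a b : LorentzA) : conjA (a + b) = conjA a + conjA b := rfl
theorem conjA_sub (a b : LorentzA) : conjA (a - b) = conjA a - conjA b := rfl
theorem conjA_neg (a : LorentzA) : conjA (-a) = -conjA a := rfl
theorem conjA_conjA (a : LorentzA) : conjA (conjA a) = a := rfl
theorem conjA_one : conjA 1 = 1 := rfl

theorem det_ctrans (C : M2A) : (ctrans C).det = conjA C.det := by
  simp only [ctrans, Matrix.det_transpose, Matrix.det_fin_two, Matrix.map_apply,
    conjA_sub, conjA_mul]

theorem F_entry (C : M2A) (i j : Fin 2) :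
    (C * !![(-1 : LorentzA), 0; 0, 1] * ctrans C) i j =
      C i 1 * conjA (C j 1) - C i 0 * conjA (C j 0) := by
  simp [Matrix.mul_apply, Fin.sum_univ_two, ctrans]
  ring

theorem F_deriv (B : ℝ × ℝ → M2A) (x X : ℝ × ℝ)
    (hd : ∀ i j, DifferentiableAt ℝ (fun y => B y i j) x) (i j : Fin 2) :
    dMat (fun y => B y * !![(-1 : LorentzA), 0; 0, 1] * ctrans (B y)) x X i j =
      (B x i 1 * conjA (dMat B x X j 1) + dMat B x X i 1 * conjA (B x j 1))
      - (B x i 0 * conjA (dMat B x X j 0) + dMat B x X i 0 * conjA (B x j 0)) := by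
  have hc : ∀ j k, HasFDerivAt (fun y => conjA (B y j k))
      (conjL.comp (fderiv ℝ (fun y => B y j k) x)) x := fun j k =>
    conjL.hasFDerivAt.comp x (hd j k).hasFDerivAt
  have h := (((hd i 1).hasFDerivAt.mul (hc j 1)).sub ((hd i 0).hasFDerivAt.mul (hc j 0)))
  have h2 : HasFDerivAt (fun y => (B y * !![(-1 : LorentzA), 0; 0, 1] * ctrans (B y)) i j) _ x :=
    h.congr_of_eventuallyEq (Filter.Eventually.of_forall fun y => F_entry (B y) i j)
  simp only [dMat, Matrix.of_apply]
  rw [h2.fderiv]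
  simp [conjL_apply, mul_comm]

theorem dMat_lin (B : ℝ × ℝ → M2A) (x X : ℝ × ℝ) (i j : Fin 2) :
    dMat B x X i j = X.1 • dMat B x (1, 0) i j + X.2 • dMat B x (0, 1) i j := by
  simp only [dMat, Matrix.of_apply]
  rw [← map_smul, ← map_smul, ← map_add]
  congr 1
  ext <;> simp

/-- Let `B : U → SL₂(𝒜)` be `C¹` with `B⁻¹dB = [[0, θ], [ω, 0]]` for
conformal 1-forms `θ = θ₀·da`, `ω = ω₀·da`.  Then `F = B·diag(-1,1)·B*` takes values in
`𝕊^{1,2} ≅ {C ∈ Herm₂(𝒜) : det C = -1}`, its differential is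
`dF(X) = B·[[0, θ₀z - ω̂₀ẑ], [θ̂₀ẑ - ω₀z, 0]]·B*`, and
`-det dF(X) = |θ₀z - ω̂₀ẑ|²`, the induced metric of the immersion. -/
theorem stmt17 (U : Set (ℝ × ℝ)) (hU : IsOpen U)
    (B : ℝ × ℝ → M2A) (θ₀ ω₀ : ℝ × ℝ → LorentzA)
    (hB : ∀ i j, ContDiffOn ℝ 1 (fun x => B x i j) U)
    (hBsl : ∀ x ∈ U, (B x).det = 1)
    (hθ : ContDiffOn ℝ 1 θ₀ U) (hω : ContDiffOn ℝ 1 ω₀ U)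
    (hθc : ∀ x ∈ U, Dahat θ₀ x = 0) (hωc : ∀ x ∈ U, Dahat ω₀ x = 0)
    (hu : ∀ x ∈ U, (B x)⁻¹ * dMat B x (1, 0) = !![0, θ₀ x; ω₀ x, 0])
    (hv : ∀ x ∈ U, (B x)⁻¹ * dMat B x (0, 1) = !![0, sA * θ₀ x; sA * ω₀ x, 0]) :
    (∀ x ∈ U, B x * !![(-1 : LorentzA), 0; 0, 1] * ctrans (B x) ∈ Herm2 ∧
      (B x * !![(-1 : LorentzA), 0; 0, 1] * ctrans (B x)).det = -1) ∧
    (∀ x ∈ U, ∀ X : ℝ × ℝ,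
      dMat (fun y => B y * !![(-1 : LorentzA), 0; 0, 1] * ctrans (B y)) x X =
        B x * !![0, θ₀ x * mkA X.1 X.2 - conjA (ω₀ x) * conjA (mkA X.1 X.2);
                 conjA (θ₀ x) * conjA (mkA X.1 X.2) - ω₀ x * mkA X.1 X.2, 0] * ctrans (B x) ∧
      -(dMat (fun y => B y * !![(-1 : LorentzA), 0; 0, 1] * ctrans (B y)) x X).det =
        (θ₀ x * mkA X.1 X.2 - conjA (ω₀ x) * conjA (mkA X.1 X.2)) *
          conjA (θ₀ x * mkA X.1 X.2 - conjA (ω₀ x) * conjA (mkA X.1 X.2))) := by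
  refine ⟨fun x hx => ⟨?_, ?_⟩, fun x hx X => ?_⟩
  · show _ = ctrans _
    ext1 i j
    rw [F_entry, ctrans, Matrix.transpose_apply, Matrix.map_apply, F_entry]
    simp only [conjA_sub, conjA_mul, conjA_conjA]
    ring
  · rw [Matrix.det_mul, Matrix.det_mul, det_ctrans, hBsl x hx, conjA_one]
    simp [Matrix.det_fin_two]
  · have hd : ∀ i j, DifferentiableAt ℝ (fun y => B y i j) x := fun i j =>
      ((hB i j).differentiableOn (by norm_num)).differentiableAt (hU.mem_nhds hx)
    have hdet : IsUnit (B x).det := by rw [hBsl x hx]; exact isUnit_one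
    have hu' : dMat B x (1, 0) = B x * !![0, θ₀ x; ω₀ x, 0] := by
      rw [← hu x hx, Matrix.mul_nonsing_inv_cancel_left _ _ hdet]
    have hv' : dMat B x (0, 1) = B x * !![0, sA * θ₀ x; sA * ω₀ x, 0] := by
      rw [← hv x hx, Matrix.mul_nonsing_inv_cancel_left _ _ hdet]
    have hz : ∀ a : LorentzA, X.1 • a + X.2 • (sA * a) = mkA X.1 X.2 * a := by
      intro a
      ext <;> simp [sA, mkA] <;> ring
    have h0 : ∀ i, dMat B x X i 0 = mkA X.1 X.2 * (B x i 1 * ω₀ x) := by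
      intro i
      rw [dMat_lin, hu', hv', ← hz]
      simp [Matrix.mul_apply, Fin.sum_univ_two, mul_left_comm]
    have h1 : ∀ i, dMat B x X i 1 = mkA X.1 X.2 * (B x i 0 * θ₀ x) := by
      intro i
      rw [dMat_lin, hu', hv', ← hz]
      simp [Matrix.mul_apply, Fin.sum_univ_two, mul_left_comm]
    have key : dMat (fun y => B y * !![(-1 : LorentzA), 0; 0, 1] * ctrans (B y)) x X =
        B x * !![0, θ₀ x * mkA X.1 X.2 - conjA (ω₀ x) * conjA (mkA X.1 X.2);
                 conjA (θ₀ x) * conjA (mkA X.1 X.2) - ω₀ x * mkA X.1 X.2, 0] * ctrans (B x) := by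
      ext1 i j
      rw [F_deriv B x X hd i j, h0, h0, h1, h1]
      simp only [conjA_mul]
      simp only [Matrix.mul_apply, Fin.sum_univ_two, ctrans, Matrix.transpose_apply,
        Matrix.map_apply, Matrix.of_apply, Matrix.cons_val', Matrix.cons_val_zero,
        Matrix.cons_val_one, Matrix.cons_val_fin_one]
      ring
    refine ⟨key, ?_⟩
    rw [key, Matrix.det_mul, Matrix.det_mul, det_ctrans, hBsl x hx, conjA_one,
      Matrix.det_fin_two_of]
    simp only [conjA_sub, conjA_mul, conjA_conjA]
    ring
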